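/- arXiv:1308.2418 — 2 statements merged into one kernel-verified Lean document; each statement's English description precedes it below -/
import Mathlib

section
/- Let (fₖ) be a sequence of H-valued random variables with sup_k ‖fₖ‖ ∈ L_p, p > 1, and (nₖ) any sequence of indices. Then E[sup_k ‖E[fₖ | F_{nₖ}]‖^p] ≤ (p/(p−1))^p E[(sup_k ‖fₖ‖)^p]. -/
open MeasureTheory
open scoped ENNReal NNReal

/-!
If `g = sup_k ‖fₖ‖` is in `L^p`, the conditional Jensen inequality gives
`‖E[fₖ | F_{nₖ}]‖ ≤ E[g | F_{nₖ}] ≤ sup_n E[g | Fₙ]`, so the indices `nₖ` no longer matter and the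
claim is Doob's `L^p` inequality for the martingale `E[g | Fₙ]`. The latter follows from Doob's
maximal inequality `t μ{X* ≥ t} ≤ ∫_{X* ≥ t} X`: integrating against `p t^(p-2) dt` gives
`∫ (X*)^p ≤ p/(p-1) ∫ X (X*)^(p-1)`, and Hölder's inequality allows one to divide by
`‖X*‖_p^(p-1)`, which is made finite by truncation.
-/

theorem le_rpow_mul_of_le_mul_rpow_mul_rpow {a b c : ℝ≥0∞} {p q : ℝ} (hpq : p.HolderConjugate q)
    (ha : a ≠ ∞) (h : a ≤ c * (b ^ (1 / p) * a ^ (1 / q))) : a ≤ c ^ p * b := by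
  rcases eq_or_ne a 0 with rfl | ha0
  · exact zero_le
  have hsplit : a = a ^ (1 / p) * a ^ (1 / q) := by
    rw [← ENNReal.rpow_add _ _ ha0 ha, one_div, one_div, hpq.inv_add_inv_eq_one, ENNReal.rpow_one]
  have haq0 : a ^ (1 / q) ≠ 0 := by simp [ENNReal.rpow_eq_zero_iff, ha0, ha]
  have haq_top : a ^ (1 / q) ≠ ∞ :=
    ENNReal.rpow_ne_top_of_nonneg (one_div_nonneg.2 hpq.symm.nonneg) ha
  have hroot : a ^ (1 / p) ≤ c * b ^ (1 / p) := by
    rwa [← ENNReal.mul_le_mul_iff_left haq0 haq_top, ← hsplit, mul_assoc]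
  calc a = (a ^ (1 / p)) ^ p := by
        rw [← ENNReal.rpow_mul, one_div_mul_cancel hpq.ne_zero, ENNReal.rpow_one]
    _ ≤ (c * b ^ (1 / p)) ^ p := ENNReal.rpow_le_rpow hroot hpq.nonneg
    _ = c ^ p * b := by
        rw [ENNReal.mul_rpow_of_nonneg _ _ hpq.nonneg, ← ENNReal.rpow_mul,
          one_div_mul_cancel hpq.ne_zero, ENNReal.rpow_one]

section Measure

open Filter Set

variable {Ω : Type*} {m mΩ : MeasurableSpace Ω} {μ : Measure Ω} {p : ℝ}

section WeakType

variable {X : Ω → ℝ≥0∞} {Y : Ω → ℝ}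

theorem lintegral_ofReal_rpow_eq_lintegral_meas_le_mul (hY : AEMeasurable Y μ) (hp : 0 < p) :
    ∫⁻ ω, ENNReal.ofReal (Y ω) ^ p ∂μ =
      ENNReal.ofReal p * ∫⁻ t in Ioi (0 : ℝ), μ {ω | t ≤ Y ω} * ENNReal.ofReal (t ^ (p - 1)) := by
  have hpos (ω : Ω) : ENNReal.ofReal (Y ω) ^ p = ENNReal.ofReal (max (Y ω) 0 ^ p) := by
    rw [← ENNReal.ofReal_rpow_of_nonneg (le_max_right _ _) hp.le, ENNReal.ofReal_max]
    simp
  simp_rw [hpos]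
  rw [lintegral_rpow_eq_lintegral_meas_le_mul μ (f := fun ω ↦ max (Y ω) 0)
    (ae_of_all _ fun _ ↦ le_max_right _ _)
    (hY.max aemeasurable_const) hp]
  congr 1
  refine setLIntegral_congr_fun measurableSet_Ioi fun t (ht : 0 < t) ↦ ?_
  simp only [le_max_iff, ht.not_ge, or_false]

theorem lintegral_rpow_le_lintegral_mul_rpow_of_mul_meas_le (hX : AEMeasurable X μ)
    (hY : AEMeasurable Y μ) (hp : 1 < p)
    (h : ∀ t, 0 < t → ENNReal.ofReal t * μ {ω | t ≤ Y ω} ≤ ∫⁻ ω in {ω | t ≤ Y ω}, X ω ∂μ) :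
    ∫⁻ ω, ENNReal.ofReal (Y ω) ^ p ∂μ ≤
      ENNReal.ofReal (p / (p - 1)) * ∫⁻ ω, X ω * ENNReal.ofReal (Y ω) ^ (p - 1) ∂μ := by
  have hp1 : 0 < p - 1 := sub_pos.2 hp
  have hp0 : 0 < p := one_pos.trans hp
  have hlayer : ∫⁻ ω, X ω * ENNReal.ofReal (Y ω) ^ (p - 1) ∂μ =
      ENNReal.ofReal (p - 1) * ∫⁻ t in Ioi (0 : ℝ),
        (∫⁻ ω in {ω | t ≤ Y ω}, X ω ∂μ) * ENNReal.ofReal (t ^ (p - 1 - 1)) := by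
    have hset (t : ℝ) : μ.withDensity X {ω | t ≤ Y ω} = ∫⁻ ω in {ω | t ≤ Y ω}, X ω ∂μ :=
      withDensity_apply₀ _ (nullMeasurableSet_le aemeasurable_const hY)
    simp_rw [← hset]
    rw [← lintegral_ofReal_rpow_eq_lintegral_meas_le_mul
        (hY.mono_ac (withDensity_absolutelyContinuous μ X)) hp1,
      lintegral_withDensity_eq_lintegral_mul₀ hX (by fun_prop)]
    simp only [Pi.mul_apply]
  rw [hlayer, ← mul_assoc, ← ENNReal.ofReal_mul (by positivity), div_mul_cancel₀ _ hp1.ne',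
    lintegral_ofReal_rpow_eq_lintegral_meas_le_mul hY hp0]
  gcongr ENNReal.ofReal p * ?_
  refine setLIntegral_mono' measurableSet_Ioi fun t (ht : 0 < t) ↦ ?_
  calc μ {ω | t ≤ Y ω} * ENNReal.ofReal (t ^ (p - 1))
      = ENNReal.ofReal t * μ {ω | t ≤ Y ω} * ENNReal.ofReal (t ^ (p - 1 - 1)) := by
        rw [Real.rpow_sub_one ht.ne' (p - 1), mul_right_comm, ← ENNReal.ofReal_mul ht.le,
          mul_div_cancel₀ _ ht.ne', mul_comm]
    _ ≤ (∫⁻ ω in {ω | t ≤ Y ω}, X ω ∂μ) * ENNReal.ofReal (t ^ (p - 1 - 1)) := by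
        gcongr
        exact h t ht

theorem lintegral_rpow_le_of_mul_meas_le_of_ne_top (hX : AEMeasurable X μ)
    (hY : AEMeasurable Y μ) (hp : 1 < p) (hYp : ∫⁻ ω, ENNReal.ofReal (Y ω) ^ p ∂μ ≠ ∞)
    (h : ∀ t, 0 < t → ENNReal.ofReal t * μ {ω | t ≤ Y ω} ≤ ∫⁻ ω in {ω | t ≤ Y ω}, X ω ∂μ) :
    ∫⁻ ω, ENNReal.ofReal (Y ω) ^ p ∂μ ≤
      ENNReal.ofReal ((p / (p - 1)) ^ p) * ∫⁻ ω, X ω ^ p ∂μ := by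
  have hpq : p.HolderConjugate (p / (p - 1)) := .conjExponent hp
  rw [← ENNReal.ofReal_rpow_of_nonneg hpq.symm.nonneg hpq.nonneg]
  refine le_rpow_mul_of_le_mul_rpow_mul_rpow hpq hYp ?_
  refine (lintegral_rpow_le_lintegral_mul_rpow_of_mul_meas_le hX hY hp h).trans ?_
  gcongr
  refine (ENNReal.lintegral_mul_le_Lp_mul_Lq μ hpq hX
    (g := fun ω ↦ ENNReal.ofReal (Y ω) ^ (p - 1)) (by fun_prop)).trans_eq ?_
  simp_rw [← ENNReal.rpow_mul, hpq.sub_one_mul_conj]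

theorem lintegral_rpow_le_of_mul_meas_le [IsFiniteMeasure μ] (hX : AEMeasurable X μ)
    (hY : AEMeasurable Y μ) (hp : 1 < p)
    (h : ∀ t, 0 < t → ENNReal.ofReal t * μ {ω | t ≤ Y ω} ≤ ∫⁻ ω in {ω | t ≤ Y ω}, X ω ∂μ) :
    ∫⁻ ω, ENNReal.ofReal (Y ω) ^ p ∂μ ≤
      ENNReal.ofReal ((p / (p - 1)) ^ p) * ∫⁻ ω, X ω ^ p ∂μ := by
  have hp0 : 0 ≤ p := zero_le_one.trans hp.le
  have htrunc (N : ℕ) : ∫⁻ ω, ENNReal.ofReal (min (Y ω) N) ^ p ∂μ ≤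
      ENNReal.ofReal ((p / (p - 1)) ^ p) * ∫⁻ ω, X ω ^ p ∂μ := by
    refine lintegral_rpow_le_of_mul_meas_le_of_ne_top hX (hY.min aemeasurable_const) hp ?_
      fun t ht ↦ ?_
    · refine ((lintegral_mono fun ω ↦ ENNReal.rpow_le_rpow
        (ENNReal.ofReal_le_ofReal (min_le_right (Y ω) N)) hp0).trans_lt ?_).ne
      rw [lintegral_const]
      exact ENNReal.mul_lt_top (ENNReal.rpow_lt_top_of_nonneg hp0 ENNReal.ofReal_ne_top)
        (measure_lt_top μ univ)
    · by_cases htN : t ≤ N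
      · simpa only [le_min_iff, htN, and_true] using h t ht
      · simp [htN]
  refine le_of_tendsto' (lintegral_tendsto_of_tendsto_of_monotone (by fun_prop)
    (ae_of_all _ fun ω M N hMN ↦ ?_) (ae_of_all _ fun ω ↦ ?_)) htrunc
  · dsimp only
    gcongr
  · refine tendsto_const_nhds.congr' ?_
    filter_upwards [eventually_ge_atTop ⌈Y ω⌉₊] with N hN
    rw [min_eq_left (Nat.ceil_le.1 hN)]

end WeakType

theorem aemeasurable_partialSups {α : Type*} [SemilatticeSup α] [MeasurableSpace α]
    [MeasurableSup₂ α] {X : ℕ → Ω → α} (hX : ∀ k, AEMeasurable (X k) μ) (n : ℕ) :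
    AEMeasurable (partialSups X n) μ := by
  induction n with
  | zero => simpa only [partialSups_zero] using hX 0
  | succ n ih =>
    rw [← Order.succ_eq_add_one, partialSups_succ]
    exact ih.sup (hX _)

section Doob

variable [IsFiniteMeasure μ] {𝒢 : Filtration ℕ mΩ} {X : ℕ → Ω → ℝ}

theorem mul_meas_le_partialSups_le_of_submartingale (hX : Submartingale X 𝒢 μ) (n : ℕ) {t : ℝ}
    (ht : 0 < t) :
    ENNReal.ofReal t * μ {ω | t ≤ partialSups X n ω} ≤
      ∫⁻ ω in {ω | t ≤ partialSups X n ω}, ENNReal.ofReal (X n ω) ∂μ := by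
  have hset : {ω | t ≤ partialSups X n ω} =
      {ω | ((t.toNNReal : ℝ≥0) : ℝ) ≤
        (Finset.range (n + 1)).sup' Finset.nonempty_range_add_one fun k ↦ X⁺ k ω} := by
    ext ω
    simp [Pi.partialSups_apply, partialSups_eq_sup'_range, Finset.le_sup'_iff, posPart_def, ht.le,
      ht.not_ge]
  rw [hset]
  refine (maximal_ineq hX.pos (posPart_nonneg X) n).trans_eq ?_
  rw [ofReal_integral_eq_lintegral_ofReal (hX.pos.integrable n).integrableOn
    (ae_of_all _ (posPart_nonneg (X n)))]
  simp [posPart_def]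

theorem lintegral_partialSups_rpow_le_of_submartingale (hX : Submartingale X 𝒢 μ) (hp : 1 < p)
    (n : ℕ) :
    ∫⁻ ω, ENNReal.ofReal (partialSups X n ω) ^ p ∂μ ≤
      ENNReal.ofReal ((p / (p - 1)) ^ p) * ∫⁻ ω, ENNReal.ofReal (X n ω) ^ p ∂μ :=
  lintegral_rpow_le_of_mul_meas_le (hX.integrable n).aemeasurable.ennreal_ofReal
    (aemeasurable_partialSups (fun k ↦ (hX.integrable k).aemeasurable) n) hp
    fun _ ↦ mul_meas_le_partialSups_le_of_submartingale hX n

theorem lintegral_iSup_ofReal_rpow_le_of_submartingale (hX : Submartingale X 𝒢 μ) (hp : 1 < p) :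
    ∫⁻ ω, (⨆ n, ENNReal.ofReal (X n ω)) ^ p ∂μ ≤
      ENNReal.ofReal ((p / (p - 1)) ^ p) * ⨆ n, ∫⁻ ω, ENNReal.ofReal (X n ω) ^ p ∂μ := by
  have hp0 : 0 < p := one_pos.trans hp
  calc ∫⁻ ω, (⨆ n, ENNReal.ofReal (X n ω)) ^ p ∂μ
      ≤ ∫⁻ ω, ⨆ n, ENNReal.ofReal (partialSups X n ω) ^ p ∂μ := by
        refine lintegral_mono fun ω ↦ ?_
        refine ((ENNReal.orderIsoRpow p hp0).map_iSup _).trans_le (iSup_mono fun n ↦ ?_)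
        simp only [ENNReal.orderIsoRpow_apply]
        gcongr
        exact le_partialSups X n ω
    _ = ⨆ n, ∫⁻ ω, ENNReal.ofReal (partialSups X n ω) ^ p ∂μ := by
        refine lintegral_iSup' (fun n ↦ ?_) (ae_of_all _ fun ω m n hmn ↦ ?_)
        · exact (aemeasurable_partialSups
            (fun k ↦ (hX.integrable k).aemeasurable) n).ennreal_ofReal.pow_const p
        · dsimp only
          gcongr
          exact partialSups_monotone X hmn ω
    _ ≤ ENNReal.ofReal ((p / (p - 1)) ^ p) * ⨆ n, ∫⁻ ω, ENNReal.ofReal (X n ω) ^ p ∂μ := by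
        rw [ENNReal.mul_iSup]
        exact iSup_mono fun n ↦ lintegral_partialSups_rpow_le_of_submartingale hX hp n

end Doob

section CondExp

variable {E : Type*} [NormedAddCommGroup E] [NormedSpace ℝ E] [CompleteSpace E]

theorem lintegral_enorm_condExp_rpow_le (f : Ω → E) (hp : 1 ≤ p) :
    ∫⁻ ω, ‖(μ[f | m]) ω‖ₑ ^ p ∂μ ≤ ∫⁻ ω, ‖f ω‖ₑ ^ p ∂μ := by
  have hp0 : 0 < p := one_pos.trans_le hp
  have hcontr := eLpNorm_condExp_le_eLpNorm (m := m) (μ := μ) f (ENNReal.one_le_ofReal.2 hp)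
  have hne0 : ENNReal.ofReal p ≠ 0 := (ENNReal.ofReal_pos.2 hp0).ne'
  rwa [eLpNorm_eq_lintegral_rpow_enorm_toReal hne0 ENNReal.ofReal_ne_top,
    eLpNorm_eq_lintegral_rpow_enorm_toReal hne0 ENNReal.ofReal_ne_top,
    ENNReal.toReal_ofReal hp0.le, ENNReal.rpow_le_rpow_iff (one_div_pos.2 hp0)] at hcontr

theorem norm_condExp_le_condExp_of_norm_le {f : Ω → E} {F : Ω → ℝ}
    (hf : AEStronglyMeasurable f μ) (hF : Integrable F μ) (h : ∀ᵐ ω ∂μ, ‖f ω‖ ≤ F ω) :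
    ∀ᵐ ω ∂μ, ‖(μ[f | m]) ω‖ ≤ (μ[F | m]) ω :=
  (norm_condExp_le f).trans (condExp_mono (hF.mono' hf h).norm hF h)

variable [IsFiniteMeasure μ] (𝒢 : Filtration ℕ mΩ)

theorem lintegral_iSup_ofReal_condExp_rpow_le (F : Ω → ℝ) (hp : 1 < p) :
    ∫⁻ ω, (⨆ n, ENNReal.ofReal ((μ[F | 𝒢 n]) ω)) ^ p ∂μ ≤
      ENNReal.ofReal ((p / (p - 1)) ^ p) * ∫⁻ ω, ‖F ω‖ₑ ^ p ∂μ := by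
  refine (lintegral_iSup_ofReal_rpow_le_of_submartingale
    (martingale_condExp F 𝒢 μ).submartingale hp).trans ?_
  gcongr
  refine iSup_le fun n ↦ le_trans (lintegral_mono fun ω ↦ ?_)
    (lintegral_enorm_condExp_rpow_le (m := 𝒢 n) F hp.le)
  gcongr
  exact Real.ofReal_le_enorm _

theorem lintegral_iSup_enorm_condExp_rpow_le_of_norm_le {κ : Type*} [Countable κ]
    {f : κ → Ω → E} {F : Ω → ℝ} (hf : ∀ k, AEStronglyMeasurable (f k) μ) (hF : Integrable F μ)
    (hfF : ∀ k, ∀ᵐ ω ∂μ, ‖f k ω‖ ≤ F ω) (nk : κ → ℕ) (hp : 1 < p) :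
    ∫⁻ ω, (⨆ k, ‖(μ[f k | 𝒢 (nk k)]) ω‖ₑ) ^ p ∂μ ≤
      ENNReal.ofReal ((p / (p - 1)) ^ p) * ∫⁻ ω, ‖F ω‖ₑ ^ p ∂μ := by
  refine le_trans (lintegral_mono_ae ?_) (lintegral_iSup_ofReal_condExp_rpow_le 𝒢 F hp)
  filter_upwards [ae_all_iff.2 fun k ↦
    norm_condExp_le_condExp_of_norm_le (m := 𝒢 (nk k)) (hf k) hF (hfF k)] with ω hω
  refine ENNReal.rpow_le_rpow (iSup_le fun k ↦ le_iSup_of_le (nk k) ?_) (by linarith)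
  rw [← ofReal_norm]
  exact ENNReal.ofReal_le_ofReal (hω k)

end CondExp

theorem lintegral_ne_top_of_lintegral_rpow_ne_top [IsFiniteMeasure μ] {g : Ω → ℝ≥0∞} (hp : 1 ≤ p)
    (h : ∫⁻ ω, g ω ^ p ∂μ ≠ ∞) : ∫⁻ ω, g ω ∂μ ≠ ∞ := by
  have hle (ω : Ω) : g ω ≤ 1 + g ω ^ p := by
    rcases le_total (g ω) 1 with h1 | h1
    · exact h1.trans le_self_add
    · exact (ENNReal.le_rpow_self_of_one_le h1 hp).trans le_add_self
  refine ((lintegral_mono hle).trans_lt ?_).ne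
  rw [lintegral_add_left measurable_const, lintegral_one]
  exact ENNReal.add_lt_top.2 ⟨measure_lt_top μ univ, h.lt_top⟩

theorem stmt_12_general [IsFiniteMeasure μ] {E κ : Type*} [NormedAddCommGroup E] [NormedSpace ℝ E]
    [CompleteSpace E] [Countable κ] (𝒢 : Filtration ℕ mΩ) {f : κ → Ω → E}
    (hf : ∀ k, AEStronglyMeasurable (f k) μ) (nk : κ → ℕ) (hp : 1 < p) :
    ∫⁻ ω, (⨆ k, ‖(μ[f k | 𝒢 (nk k)]) ω‖ₑ) ^ p ∂μ ≤
      ENNReal.ofReal ((p / (p - 1)) ^ p) * ∫⁻ ω, (⨆ k, ‖f k ω‖ₑ) ^ p ∂μ := by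
  have hconst : 0 < p / (p - 1) := div_pos (one_pos.trans hp) (sub_pos.2 hp)
  rcases eq_or_ne (∫⁻ ω, (⨆ k, ‖f k ω‖ₑ) ^ p ∂μ) ∞ with htop | hfin
  · rw [htop, ENNReal.mul_top (ENNReal.ofReal_pos.2 (Real.rpow_pos_of_pos hconst p)).ne']
    exact le_top
  have hsup_meas : AEMeasurable (fun ω ↦ ⨆ k, ‖f k ω‖ₑ) μ := .iSup fun k ↦ (hf k).enorm
  have hsup_int := lintegral_ne_top_of_lintegral_rpow_ne_top hp.le hfin
  have hsup_fin : ∀ᵐ ω ∂μ, ⨆ k, ‖f k ω‖ₑ < ∞ := ae_lt_top' hsup_meas hsup_int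
  refine (lintegral_iSup_enorm_condExp_rpow_le_of_norm_le 𝒢 hf
    (integrable_toReal_of_lintegral_ne_top hsup_meas hsup_int) (fun k ↦ ?_) nk hp).trans_eq ?_
  · filter_upwards [hsup_fin] with ω hω
    simpa only [toReal_enorm] using ENNReal.toReal_mono hω.ne (le_iSup (fun k ↦ ‖f k ω‖ₑ) k)
  · congr 1
    refine lintegral_congr_ae ?_
    filter_upwards [hsup_fin] with ω hω
    rw [Real.enorm_of_nonneg ENNReal.toReal_nonneg, ENNReal.ofReal_toReal hω.ne]

end Measure

/-- The `ℓ_∞` endpoint in the proof of Stein's inequality: for `p > 1`,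
`E[sup_k ‖E[fₖ | F_{nₖ}]‖^p] ≤ (p/(p-1))^p E[(sup_k ‖fₖ‖)^p]`. -/
theorem stmt_12 {Ω H : Type*} {mΩ : MeasurableSpace Ω} {μ : Measure Ω} [IsProbabilityMeasure μ]
    [NormedAddCommGroup H] [InnerProductSpace ℝ H] [CompleteSpace H] [SecondCountableTopology H]
    (𝒢 : Filtration ℕ mΩ) (f : ℕ → Ω → H) (hf : ∀ k, Integrable (f k) μ)
    (nk : ℕ → ℕ) (p : ℝ) (hp : 1 < p)
    (hsup : ∫⁻ ω, (⨆ k, (‖f k ω‖₊ : ℝ≥0∞)) ^ p ∂μ ≠ ∞) :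
    ∫⁻ ω, (⨆ k, (‖(μ[f k | 𝒢 (nk k)]) ω‖₊ : ℝ≥0∞)) ^ p ∂μ ≤
      ENNReal.ofReal ((p / (p - 1)) ^ p) * ∫⁻ ω, (⨆ k, (‖f k ω‖₊ : ℝ≥0∞)) ^ p ∂μ :=
  stmt_12_general 𝒢 (fun k ↦ (hf k).aestronglyMeasurable) nk hp
end

section
/- (Stein's inequality) Let (Fₙ) be a filtration, (fₖ) a sequence of H-valued random variables, and (nₖ) a sequence of indices. Then for every p ∈ (1, ∞) there is a constant C_p such that ‖(∑ₖ ‖E[fₖ | F_{nₖ}]‖²)^{1/2}‖_{L_p} ≤ C_p ‖(∑ₖ ‖fₖ‖²)^{1/2}‖_{L_p}. -/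
open MeasureTheory
open scoped ENNReal NNReal

/-!
For `p ≥ 2`, conditional Jensen bounds `‖E[fₖ | F_{nₖ}]‖²` by `E[‖fₖ‖² | F_{nₖ}]`, and the dual Doob
inequality `E (∑ E[bₖ | F_{nₖ}])^r ≤ r^r E (∑ bₖ)^r` with `r = p / 2 ≥ 1` concludes. To prove the
latter, add the terms in increasing order of `nₖ`. By `x^r - y^r ≤ r (x - y) x^(r - 1)`, each step
increases the `r`-th moment by at most `r E[bₖ S^(r - 1)]`, where `S` is the whole sum. Altogether
`E S^r ≤ r E[(∑ bₖ) S^(r - 1)]`, and Hölder allows one to absorb the power of `S`; replacing `S` by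
`min S c` makes the absorbed quantity finite.

For `1 < p < 2` the estimate is dual to the one for the conjugate exponent, because
`(fₖ) ↦ (E[fₖ | F_{nₖ}])` is symmetric for the `L²(ℓ²(H))` pairing.
-/

namespace SteinInequality

lemma rpow_le_rpow_add_mul_sub {x y r : ℝ} (hx : 0 ≤ x) (hy : 0 ≤ y) (hr : 1 ≤ r) :
    x ^ r ≤ y ^ r + r * ((x - y) * x ^ (r - 1)) := by
  rcases hx.eq_or_lt with rfl | hx
  · rcases hr.eq_or_lt with rfl | hr
    · simp
    · rw [Real.zero_rpow (by linarith), Real.zero_rpow (by linarith)]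
      simpa using Real.rpow_nonneg hy r
  · have bernoulli : 1 + r * (y / x - 1) ≤ (y / x) ^ r := by
      simpa using one_add_mul_self_le_rpow_one_add (s := y / x - 1)
        (by linarith [div_nonneg hy hx.le]) hr
    rw [Real.div_rpow hy hx.le, le_div_iff₀ (by positivity)] at bernoulli
    have hxr : x ^ r = x * x ^ (r - 1) := by
      rw [Real.rpow_sub_one hx.ne']
      field_simp
    have expand : (1 + r * (y / x - 1)) * x ^ r = x ^ r - r * ((x - y) * x ^ (r - 1)) := by
      rw [hxr]
      field_simp
      ring
    linarith

lemma ennreal_rpow_le_rpow_add_mul_tsub {x : ℝ≥0∞} (hx : x ≠ ∞) (y : ℝ≥0∞) {r : ℝ}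
    (hr : 1 ≤ r) : x ^ r ≤ y ^ r + ENNReal.ofReal r * ((x - y) * x ^ (r - 1)) := by
  have hr₀ : 0 ≤ r := by linarith
  rcases le_total x y with hxy | hxy
  · exact (ENNReal.rpow_le_rpow hxy hr₀).trans le_self_add
  lift x to ℝ≥0 using hx
  lift y to ℝ≥0 using ne_top_of_le_ne_top ENNReal.coe_ne_top hxy
  lift r to ℝ≥0 using hr₀
  have hxy : y ≤ x := by exact_mod_cast hxy
  rw [← ENNReal.coe_sub, ENNReal.ofReal_coe_nnreal,
    ← ENNReal.coe_rpow_of_nonneg _ (by linarith : (0 : ℝ) ≤ r - 1),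
    ← ENNReal.coe_rpow_of_nonneg _ r.coe_nonneg, ← ENNReal.coe_rpow_of_nonneg _ r.coe_nonneg]
  norm_cast
  rw [← NNReal.coe_le_coe]
  push_cast [NNReal.coe_sub hxy]
  exact rpow_le_rpow_add_mul_sub x.2 y.2 hr

lemma ennreal_rpow_le_of_le_mul_rpow_one_sub {a K : ℝ≥0∞} {s : ℝ} (hs : 0 < s) (ha : a ≠ ∞)
    (h : a ≤ K * a ^ (1 - s)) : a ^ s ≤ K := by
  rcases eq_or_ne a 0 with rfl | ha₀
  · simp [ENNReal.zero_rpow_of_pos hs]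
  have hpow₀ : a ^ (1 - s) ≠ 0 := by simp [ha, ha₀]
  have hpow : a ^ (1 - s) ≠ ∞ := by simp [ha, ha₀]
  rw [← ENNReal.mul_le_mul_iff_left hpow₀ hpow, ← ENNReal.rpow_add _ _ ha₀ ha]
  simpa using h

section Lintegral

variable {Ω : Type*} {mΩ : MeasurableSpace Ω} {μ : Measure Ω}

lemma lintegral_mul_rpow_sub_one_le {X Y : Ω → ℝ≥0∞} (hX : AEMeasurable X μ)
    (hY : AEMeasurable Y μ) {r : ℝ} (hr : 1 ≤ r) :
    ∫⁻ ω, X ω * Y ω ^ (r - 1) ∂μ ≤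
      (∫⁻ ω, X ω ^ r ∂μ) ^ (1 / r) * (∫⁻ ω, Y ω ^ r ∂μ) ^ (1 - 1 / r) := by
  have hr₀ : 0 < r := by linarith
  have holder := ENNReal.lintegral_mul_norm_pow_le (μ := μ) (hX.pow_const r) (hY.pow_const r)
    (p := 1 / r) (q := 1 - 1 / r) (by positivity)
    (by rw [sub_nonneg, div_le_one hr₀]; exact hr) (by ring)
  have hexp : r * (1 - 1 / r) = r - 1 := by field_simp
  simpa only [← ENNReal.rpow_mul, mul_one_div_cancel hr₀.ne', hexp, ENNReal.rpow_one] using holder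

lemma lintegral_rpow_le_of_le_mul_lintegral {X Y : Ω → ℝ≥0∞} (hX : AEMeasurable X μ)
    (hY : AEMeasurable Y μ) {r : ℝ} (hr : 1 ≤ r) {K : ℝ≥0∞} (hfin : ∫⁻ ω, Y ω ^ r ∂μ ≠ ∞)
    (h : ∫⁻ ω, Y ω ^ r ∂μ ≤ K * ∫⁻ ω, X ω * Y ω ^ (r - 1) ∂μ) :
    ∫⁻ ω, Y ω ^ r ∂μ ≤ K ^ r * ∫⁻ ω, X ω ^ r ∂μ := by
  have hr₀ : 0 < r := by linarith
  have absorbed : (∫⁻ ω, Y ω ^ r ∂μ) ^ (1 / r) ≤ K * (∫⁻ ω, X ω ^ r ∂μ) ^ (1 / r) := by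
    refine ennreal_rpow_le_of_le_mul_rpow_one_sub (by positivity) hfin (h.trans ?_)
    rw [mul_assoc]
    gcongr
    exact lintegral_mul_rpow_sub_one_le hX hY hr
  rwa [one_div, ENNReal.rpow_inv_le_iff hr₀, ENNReal.mul_rpow_of_nonneg _ _ hr₀.le,
    ENNReal.rpow_inv_rpow hr₀.ne'] at absorbed

lemma lintegral_rpow_le_of_forall_min_natCast {X : Ω → ℝ≥0∞} (hX : AEMeasurable X μ) {r : ℝ}
    (hr : 0 ≤ r) {K : ℝ≥0∞} (h : ∀ c : ℕ, ∫⁻ ω, min (X ω) c ^ r ∂μ ≤ K) :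
    ∫⁻ ω, X ω ^ r ∂μ ≤ K := by
  refine le_of_tendsto' (lintegral_tendsto_of_tendsto_of_monotone
    (fun c ↦ (hX.min aemeasurable_const).pow_const r) (.of_forall fun ω c d hcd ↦ ?_)
    (.of_forall fun ω ↦ ?_)) h
  · dsimp only
    gcongr
  · have hmin := (tendsto_const_nhds (x := X ω)).min ENNReal.tendsto_nat_nhds_top
    rw [min_eq_left le_top] at hmin
    exact (ENNReal.continuous_rpow_const.tendsto _).comp hmin

lemma lintegral_tsum_rpow_eq_iSup {κ : Type*} [Countable κ] {b : κ → Ω → ℝ≥0∞}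
    (hb : ∀ k, AEMeasurable (b k) μ) {r : ℝ} (hr : 0 < r) :
    ∫⁻ ω, (∑' k, b k ω) ^ r ∂μ = ⨆ s : Finset κ, ∫⁻ ω, (∑ k ∈ s, b k ω) ^ r ∂μ := by
  rw [← lintegral_iSup_directed fun s ↦
    (Finset.aemeasurable_fun_sum s fun k _ ↦ hb k).pow_const r]
  · refine lintegral_congr fun ω ↦ ?_
    rw [ENNReal.tsum_eq_iSup_sum]
    exact (ENNReal.orderIsoRpow r hr).map_iSup _
  · refine Monotone.directed_le fun s t hst ω ↦ ?_
    dsimp only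
    gcongr

lemma lintegral_condLExp_mul {m : MeasurableSpace Ω} (hm : m ≤ mΩ) [SigmaFinite (μ.trim hm)]
    {X Y : Ω → ℝ≥0∞} (hX : AEMeasurable X μ) (hY : Measurable[m] Y) :
    ∫⁻ ω, μ⁻[X | m] ω * Y ω ∂μ = ∫⁻ ω, X ω * Y ω ∂μ := by
  have htrim : (μ.withDensity μ⁻[X | m]).trim hm = (μ.withDensity X).trim hm := by
    refine @Measure.ext _ m _ _ fun s hs ↦ ?_
    rw [trim_measurableSet_eq hm hs, trim_measurableSet_eq hm hs, withDensity_apply _ (hm s hs),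
      withDensity_apply _ (hm s hs), setLIntegral_condLExp hm μ X hs]
  have hX' : AEMeasurable μ⁻[X | m] μ := ((measurable_condLExp m μ X).mono hm le_rfl).aemeasurable
  have hY' : AEMeasurable Y μ := (hY.mono hm le_rfl).aemeasurable
  calc
    ∫⁻ ω, μ⁻[X | m] ω * Y ω ∂μ = ∫⁻ ω, Y ω ∂μ.withDensity μ⁻[X | m] :=
      (lintegral_withDensity_eq_lintegral_mul₀ hX' hY').symm
    _ = ∫⁻ ω, Y ω ∂μ.withDensity X := by
      rw [← lintegral_trim hm hY, htrim, lintegral_trim hm hY]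
    _ = ∫⁻ ω, X ω * Y ω ∂μ := lintegral_withDensity_eq_lintegral_mul₀ hX hY'

lemma lintegral_min_add_condLExp_rpow_le {m : MeasurableSpace Ω} (hm : m ≤ mΩ)
    [SigmaFinite (μ.trim hm)] {A b : Ω → ℝ≥0∞} (hA : Measurable[m] A) (hb : AEMeasurable b μ)
    {c : ℝ≥0∞} (hc : c ≠ ∞) {r : ℝ} (hr : 1 ≤ r) :
    ∫⁻ ω, min (A ω + μ⁻[b | m] ω) c ^ r ∂μ ≤ ∫⁻ ω, min (A ω) c ^ r ∂μ +
      ENNReal.ofReal r * ∫⁻ ω, b ω * min (A ω + μ⁻[b | m] ω) c ^ (r - 1) ∂μ := by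
  have hpow : Measurable[m] fun ω ↦ min (A ω + μ⁻[b | m] ω) c ^ (r - 1) :=
    ((hA.add (measurable_condLExp m μ b)).min measurable_const).pow_const _
  have increment : ∀ ω, min (A ω + μ⁻[b | m] ω) c - min (A ω) c ≤ μ⁻[b | m] ω := fun ω ↦ by
    rw [tsub_le_iff_left, min_add]
    exact min_le_min le_rfl le_self_add
  calc
    ∫⁻ ω, min (A ω + μ⁻[b | m] ω) c ^ r ∂μ ≤ ∫⁻ ω, (min (A ω) c ^ r +
        ENNReal.ofReal r * (μ⁻[b | m] ω * min (A ω + μ⁻[b | m] ω) c ^ (r - 1))) ∂μ := by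
      refine lintegral_mono fun ω ↦ (ennreal_rpow_le_rpow_add_mul_tsub
        (ne_top_of_le_ne_top hc (min_le_right _ _)) (min (A ω) c) hr).trans ?_
      gcongr
      exact increment ω
    _ = _ := by
      rw [lintegral_add_left (((hA.mono hm le_rfl).min measurable_const).pow_const _),
        lintegral_const_mul' _ _ ENNReal.ofReal_ne_top, lintegral_condLExp_mul hm hb hpow]

section DualDoob

variable {κ T : Type*} [LinearOrder T] (𝒢 : Filtration T mΩ) (n : κ → T) {b : κ → Ω → ℝ≥0∞}

lemma measurable_sum_condLExp {s : Finset κ} {t : T} (hs : ∀ k ∈ s, n k ≤ t) :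
    Measurable[𝒢 t] fun ω ↦ ∑ k ∈ s, μ⁻[b k | 𝒢 (n k)] ω :=
  Finset.measurable_fun_sum _ fun k hk ↦
    (measurable_condLExp _ μ _).mono (𝒢.mono (hs k hk)) le_rfl

lemma lintegral_min_sum_condLExp_rpow_le [SigmaFiniteFiltration μ 𝒢]
    (hb : ∀ k, AEMeasurable (b k) μ) {c : ℝ≥0∞} (hc : c ≠ ∞) {r : ℝ} (hr : 1 ≤ r)
    (s : Finset κ) :
    ∫⁻ ω, min (∑ k ∈ s, μ⁻[b k | 𝒢 (n k)] ω) c ^ r ∂μ ≤ ENNReal.ofReal r *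
      ∫⁻ ω, (∑ k ∈ s, b k ω) * min (∑ k ∈ s, μ⁻[b k | 𝒢 (n k)] ω) c ^ (r - 1) ∂μ := by
  classical
  induction s using Finset.induction_on_max_value n with
  | empty => simp [ENNReal.zero_rpow_of_pos (by linarith : 0 < r)]
  | insert a s has hmax ih =>
    set A : Ω → ℝ≥0∞ := fun ω ↦ ∑ k ∈ s, μ⁻[b k | 𝒢 (n k)] ω
    set E : Ω → ℝ≥0∞ := μ⁻[b a | 𝒢 (n a)]
    have hAm : Measurable[𝒢 (n a)] A := measurable_sum_condLExp 𝒢 n hmax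
    have hsum : AEMeasurable (fun ω ↦ ∑ k ∈ s, b k ω) μ :=
      Finset.aemeasurable_fun_sum _ fun k _ ↦ hb k
    have hpow : AEMeasurable (fun ω ↦ min (A ω + E ω) c ^ (r - 1)) μ :=
      ((((hAm.add (measurable_condLExp _ _ _)).min measurable_const).pow_const _).mono
        (𝒢.le _) le_rfl).aemeasurable
    have hprod : AEMeasurable (fun ω ↦ (∑ k ∈ s, b k ω) * min (A ω + E ω) c ^ (r - 1)) μ :=
      hsum.mul hpow
    have ih' : ∫⁻ ω, min (A ω) c ^ r ∂μ ≤
        ENNReal.ofReal r * ∫⁻ ω, (∑ k ∈ s, b k ω) * min (A ω + E ω) c ^ (r - 1) ∂μ := by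
      refine ih.trans ?_
      gcongr with ω
      exact le_self_add
    simp_rw [Finset.sum_insert has, add_comm (μ⁻[b a | 𝒢 (n a)] _)]
    calc
      ∫⁻ ω, min (A ω + E ω) c ^ r ∂μ ≤ ∫⁻ ω, min (A ω) c ^ r ∂μ +
          ENNReal.ofReal r * ∫⁻ ω, b a ω * min (A ω + E ω) c ^ (r - 1) ∂μ :=
        lintegral_min_add_condLExp_rpow_le (𝒢.le _) hAm (hb a) hc hr
      _ ≤ ENNReal.ofReal r * ∫⁻ ω, (∑ k ∈ s, b k ω) * min (A ω + E ω) c ^ (r - 1) ∂μ +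
          ENNReal.ofReal r * ∫⁻ ω, b a ω * min (A ω + E ω) c ^ (r - 1) ∂μ := by gcongr
      _ = ENNReal.ofReal r *
          ∫⁻ ω, (b a ω + ∑ k ∈ s, b k ω) * min (A ω + E ω) c ^ (r - 1) ∂μ := by
        simp_rw [add_mul]
        rw [lintegral_add_right' _ hprod, mul_add, add_comm]

theorem lintegral_sum_condLExp_rpow_le [IsFiniteMeasure μ] (hb : ∀ k, AEMeasurable (b k) μ)
    {r : ℝ} (hr : 1 ≤ r) (s : Finset κ) :
    ∫⁻ ω, (∑ k ∈ s, μ⁻[b k | 𝒢 (n k)] ω) ^ r ∂μ ≤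
      ENNReal.ofReal r ^ r * ∫⁻ ω, (∑ k ∈ s, b k ω) ^ r ∂μ := by
  have hr₀ : 0 ≤ r := by linarith
  have hcond : AEMeasurable (fun ω ↦ ∑ k ∈ s, μ⁻[b k | 𝒢 (n k)] ω) μ :=
    Finset.aemeasurable_fun_sum _ fun k _ ↦
      ((measurable_condLExp _ μ _).mono (𝒢.le _) le_rfl).aemeasurable
  refine lintegral_rpow_le_of_forall_min_natCast hcond hr₀ fun c ↦
    lintegral_rpow_le_of_le_mul_lintegral (Finset.aemeasurable_fun_sum _ fun k _ ↦ hb k)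
      (hcond.min aemeasurable_const) hr ?_
      (lintegral_min_sum_condLExp_rpow_le 𝒢 n hb (ENNReal.natCast_ne_top c) hr s)
  have hbdd : ∫⁻ ω, min (∑ k ∈ s, μ⁻[b k | 𝒢 (n k)] ω) c ^ r ∂μ ≤ (c : ℝ≥0∞) ^ r * μ Set.univ := by
    rw [← lintegral_const]
    gcongr
    exact min_le_right _ _
  exact ne_top_of_le_ne_top (by finiteness) hbdd

end DualDoob

end Lintegral

section Duality

open scoped RealInnerProductSpace

variable {Ω : Type*} {mΩ : MeasurableSpace Ω} {μ : Measure Ω}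

lemma eLpNorm_ofReal_eq_lintegral {E : Type*} [NormedAddCommGroup E] (u : Ω → E) {p : ℝ}
    (hp : 0 < p) :
    eLpNorm u (ENNReal.ofReal p) μ = (∫⁻ ω, ‖u ω‖ₑ ^ p ∂μ) ^ (1 / p) := by
  rw [eLpNorm_eq_lintegral_rpow_enorm_toReal (by simpa using hp) ENNReal.ofReal_ne_top,
    ENNReal.toReal_ofReal hp.le]

section InnerProductSpace

variable {E : Type*} [NormedAddCommGroup E] [InnerProductSpace ℝ E]

lemma ofReal_integral_inner_le {u v : Ω → E} (hu : AEStronglyMeasurable u μ)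
    (hv : AEStronglyMeasurable v μ) (p q : ℝ≥0∞) [p.HolderConjugate q] :
    ENNReal.ofReal (∫ ω, ⟪u ω, v ω⟫ ∂μ) ≤ eLpNorm u p μ * eLpNorm v q μ :=
  calc
    ENNReal.ofReal (∫ ω, ⟪u ω, v ω⟫ ∂μ) ≤ eLpNorm (fun ω ↦ ⟪u ω, v ω⟫) 1 μ := by
      rw [eLpNorm_one_eq_lintegral_enorm]
      exact (Real.ofReal_le_enorm _).trans (enorm_integral_le_lintegral_enorm _)
    _ ≤ eLpNorm u p μ * eLpNorm v q μ := by
      simpa using eLpNorm_le_eLpNorm_mul_eLpNorm_of_nnnorm (p := p) (q := q) (r := 1) hu hv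
        (fun x y ↦ ⟪x, y⟫) 1 (.of_forall fun ω ↦ by simpa using nnnorm_inner_le_nnnorm (u ω) (v ω))

variable {p q : ℝ}

lemma norm_norm_rpow_sub_two_smul (x : E) (hp : 1 < p) :
    ‖‖x‖ ^ (p - 2) • x‖ = ‖x‖ ^ (p - 1) := by
  rcases eq_or_ne x 0 with rfl | hx
  · simp [Real.zero_rpow (by linarith : p - 1 ≠ 0)]
  · rw [norm_smul, Real.norm_of_nonneg (by positivity),
      ← Real.rpow_add_one (norm_ne_zero_iff.2 hx)]
    ring_nf

lemma inner_norm_rpow_sub_two_smul (x : E) (hp : 1 < p) :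
    ⟪x, ‖x‖ ^ (p - 2) • x⟫ = ‖x‖ ^ p := by
  rcases eq_or_ne x 0 with rfl | hx
  · simp [Real.zero_rpow (by linarith : p ≠ 0)]
  · rw [real_inner_smul_right, real_inner_self_eq_norm_sq, ← Real.rpow_natCast,
      ← Real.rpow_add (norm_pos_iff.2 hx)]
    norm_num

lemma enorm_norm_rpow_sub_two_smul_rpow (x : E) (hpq : p.HolderConjugate q) :
    ‖‖x‖ ^ (p - 2) • x‖ₑ ^ q = ‖x‖ₑ ^ p := by
  rw [← ofReal_norm, norm_norm_rpow_sub_two_smul x hpq.lt,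
    ENNReal.ofReal_rpow_of_nonneg (by positivity) hpq.symm.nonneg,
    ← Real.rpow_mul (norm_nonneg _), hpq.sub_one_mul_conj,
    ← ENNReal.ofReal_rpow_of_nonneg (norm_nonneg _) hpq.nonneg, ofReal_norm]

/- Test against `v = ‖u‖ ^ (p - 2) • u`, for which `⟪u, v⟫ = ‖u‖ ^ p = ‖v‖ ^ q`. -/
theorem eLpNorm_le_of_forall_integral_inner_le (hpq : p.HolderConjugate q) {u : Ω → E}
    (hu : MemLp u (ENNReal.ofReal p) μ) {K : ℝ≥0∞}
    (h : ∀ v : Ω → E, MemLp v (ENNReal.ofReal q) μ →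
      ENNReal.ofReal (∫ ω, ⟪u ω, v ω⟫ ∂μ) ≤ K * eLpNorm v (ENNReal.ofReal q) μ) :
    eLpNorm u (ENNReal.ofReal p) μ ≤ K := by
  set I : ℝ≥0∞ := ∫⁻ ω, ‖u ω‖ₑ ^ p ∂μ
  have hu_norm : eLpNorm u (ENNReal.ofReal p) μ = I ^ (1 / p) :=
    eLpNorm_ofReal_eq_lintegral u hpq.pos
  have hI : I ≠ ∞ := by
    have := hu.2.ne
    rwa [hu_norm, Ne, ENNReal.rpow_eq_top_iff_of_pos (one_div_pos.2 hpq.pos)] at this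
  set v : Ω → E := fun ω ↦ ‖u ω‖ ^ (p - 2) • u ω
  have hv_meas : AEStronglyMeasurable v μ :=
    (hu.1.norm.aemeasurable.pow_const _).aestronglyMeasurable.smul hu.1
  have hv_norm : eLpNorm v (ENNReal.ofReal q) μ = I ^ (1 / q) := by
    rw [eLpNorm_ofReal_eq_lintegral v hpq.symm.pos]
    simp_rw [v, enorm_norm_rpow_sub_two_smul_rpow _ hpq, I]
  have hv : MemLp v (ENNReal.ofReal q) μ :=
    ⟨hv_meas, hv_norm ▸ ENNReal.rpow_lt_top_of_nonneg hpq.symm.one_div_nonneg hI⟩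
  have hpairing : ENNReal.ofReal (∫ ω, ⟪u ω, v ω⟫ ∂μ) = I := by
    simp_rw [v, inner_norm_rpow_sub_two_smul _ hpq.lt]
    rw [integral_eq_lintegral_of_nonneg_ae (.of_forall fun ω ↦ by positivity)
      (hu.1.norm.aemeasurable.pow_const p).aestronglyMeasurable]
    simp_rw [← ENNReal.ofReal_rpow_of_nonneg (norm_nonneg _) hpq.nonneg, ofReal_norm]
    exact ENNReal.ofReal_toReal hI
  have hself : I ≤ K * I ^ (1 - 1 / p) := by
    have hexp : 1 - 1 / p = 1 / q := by
      rw [one_div, one_div, ← hpq.inv_add_inv_eq_one]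
      ring
    rw [hexp, ← hv_norm]
    exact hpairing.symm.trans_le (h v hv)
  rw [hu_norm]
  exact ennreal_rpow_le_of_le_mul_rpow_one_sub (one_div_pos.2 hpq.pos) hI hself

end InnerProductSpace

lemma integral_bilin_condExp_comm {E F G : Type*} [NormedAddCommGroup E] [NormedSpace ℝ E]
    [CompleteSpace E] [NormedAddCommGroup F] [NormedSpace ℝ F] [CompleteSpace F]
    [NormedAddCommGroup G] [NormedSpace ℝ G] [CompleteSpace G] (B : E →L[ℝ] F →L[ℝ] G)
    {m : MeasurableSpace Ω} (hm : m ≤ mΩ) [SigmaFinite (μ.trim hm)] {f : Ω → E} {g : Ω → F}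
    (hf : Integrable f μ) (hg : Integrable g μ)
    (hfg : Integrable (fun ω ↦ B (μ[f | m] ω) (g ω)) μ)
    (hfg' : Integrable (fun ω ↦ B (f ω) (μ[g | m] ω)) μ) :
    ∫ ω, B (μ[f | m] ω) (g ω) ∂μ = ∫ ω, B (f ω) (μ[g | m] ω) ∂μ :=
  calc
    ∫ ω, B (μ[f | m] ω) (g ω) ∂μ = ∫ ω, B (μ[f | m] ω) (μ[g | m] ω) ∂μ := by
      rw [← integral_condExp hm]
      exact integral_congr_ae
        (condExp_bilin_of_stronglyMeasurable_left B stronglyMeasurable_condExp hfg hg)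
    _ = ∫ ω, B (f ω) (μ[g | m] ω) ∂μ := by
      rw [← integral_condExp hm (f := fun ω ↦ B (f ω) (μ[g | m] ω))]
      exact (integral_congr_ae
        (condExp_bilin_of_stronglyMeasurable_right B stronglyMeasurable_condExp hfg' hf)).symm

end Duality

section PiLp

variable {κ H : Type*} [Fintype κ] [NormedAddCommGroup H]

lemma enorm_sq_eq_sum (x : PiLp 2 fun _ : κ ↦ H) : ‖x‖ₑ ^ 2 = ∑ k, ‖x k‖ₑ ^ 2 := by
  simp_rw [← ofReal_norm, ← ENNReal.ofReal_pow (norm_nonneg _)]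
  rw [PiLp.norm_sq_eq_of_L2, ENNReal.ofReal_sum_of_nonneg fun _ _ ↦ by positivity]

lemma enorm_rpow_eq_sum_rpow (x : PiLp 2 fun _ : κ ↦ H) (p : ℝ) :
    ‖x‖ₑ ^ p = (∑ k, ‖x k‖ₑ ^ 2) ^ (p / 2) := by
  rw [← enorm_sq_eq_sum, ← ENNReal.rpow_natCast, ← ENNReal.rpow_mul]
  congr 1
  push_cast
  ring

lemma eLpNorm_eq_lintegral_sum_rpow {Ω : Type*} {mΩ : MeasurableSpace Ω} {μ : Measure Ω}
    (u : Ω → PiLp 2 fun _ : κ ↦ H) {p : ℝ} (hp : 0 < p) :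
    eLpNorm u (ENNReal.ofReal p) μ = (∫⁻ ω, (∑ k, ‖u ω k‖ₑ ^ 2) ^ (p / 2) ∂μ) ^ (1 / p) := by
  simp_rw [eLpNorm_ofReal_eq_lintegral u hp, enorm_rpow_eq_sum_rpow]

end PiLp

section CoordCondExp

open scoped RealInnerProductSpace

variable {Ω κ H : Type*} {mΩ : MeasurableSpace Ω} [NormedAddCommGroup H] [InnerProductSpace ℝ H]
  [CompleteSpace H]

/-- The operator `(f k) ↦ (E[f k | m k])` on functions with values in the `ℓ²`-sum of copies of `H`
indexed by a finite `κ`: each coordinate is conditioned on its own σ-algebra. Encoding a family as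
one `PiLp 2`-valued function turns its square function into the norm of the values. -/
noncomputable def coordCondExp (μ : Measure Ω) (m : κ → MeasurableSpace Ω)
    (f : Ω → PiLp 2 fun _ : κ ↦ H) : Ω → PiLp 2 fun _ : κ ↦ H :=
  fun ω ↦ WithLp.toLp 2 fun k ↦ μ[fun ω ↦ f ω k | m k] ω

variable {μ : Measure Ω}

lemma enorm_condExp_sq_le {m : MeasurableSpace Ω} {f : Ω → H}
    (hf : Integrable (fun ω ↦ ‖f ω‖ ^ 2) μ) :
    ∀ᵐ ω ∂μ, ‖μ[f | m] ω‖ₑ ^ 2 ≤ μ⁻[fun ω ↦ ‖f ω‖ₑ ^ 2 | m] ω := by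
  have jensen := Integrable.norm_condExp_rpow_le (m := m) (f := f) (μ := μ) one_le_two
    (by simpa using hf)
  simp only [Real.rpow_two] at jensen
  simp_rw [← ofReal_norm, ← ENNReal.ofReal_pow (norm_nonneg _)]
  filter_upwards [jensen, condLExp_ofReal m hf (.of_forall fun ω ↦ by positivity)]
    with ω hω hofReal
  rw [hofReal]
  exact ENNReal.ofReal_le_ofReal hω

variable [Fintype κ]

lemma memLp_coordCondExp {m : κ → MeasurableSpace Ω} {f : Ω → PiLp 2 fun _ : κ ↦ H} {p : ℝ≥0∞}
    (hp : 1 ≤ p) (hf : MemLp f p μ) : MemLp (coordCondExp μ m f) p μ :=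
  MemLp.of_eval_piLp fun k ↦ (hf.eval_piLp k).condExp hp

lemma integral_inner_coordCondExp_comm [IsFiniteMeasure μ] {m : κ → MeasurableSpace Ω}
    (hm : ∀ k, m k ≤ mΩ) {p q : ℝ≥0∞} [hpq : p.HolderConjugate q]
    {f g : Ω → PiLp 2 fun _ : κ ↦ H} (hf : MemLp f p μ) (hg : MemLp g q μ) :
    ∫ ω, ⟪coordCondExp μ m f ω, g ω⟫ ∂μ = ∫ ω, ⟪f ω, coordCondExp μ m g ω⟫ ∂μ := by
  have hp : 1 ≤ p := ENNReal.HolderConjugate.one_le p q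
  have hq : 1 ≤ q := ENNReal.HolderConjugate.one_le q p
  have integrable_inner {u v : Ω → H} (hu : MemLp u p μ) (hv : MemLp v q μ) :
      Integrable (fun ω ↦ ⟪u ω, v ω⟫) μ :=
    memLp_one_iff_integrable.1 ((innerSL ℝ).memLp_of_bilin 1 hu hv)
  have hf' (k : κ) : MemLp (fun ω ↦ f ω k) p μ := hf.eval_piLp k
  have hg' (k : κ) : MemLp (fun ω ↦ g ω k) q μ := hg.eval_piLp k
  have hleft (k : κ) := integrable_inner ((hf' k).condExp (m := m k) hp) (hg' k)
  have hright (k : κ) := integrable_inner (hf' k) ((hg' k).condExp (m := m k) hq)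
  simp_rw [PiLp.inner_apply, coordCondExp]
  rw [integral_finsetSum _ fun k _ ↦ hleft k, integral_finsetSum _ fun k _ ↦ hright k]
  exact Finset.sum_congr rfl fun k _ ↦ integral_bilin_condExp_comm (innerSL ℝ) (hm k)
    ((hf' k).integrable hp) ((hg' k).integrable hq) (hleft k) (hright k)

section Filtration

variable [IsFiniteMeasure μ] {T : Type*} [LinearOrder T] (𝒢 : Filtration T mΩ) (n : κ → T)
  {f : Ω → PiLp 2 fun _ : κ ↦ H} {p q : ℝ}

lemma lintegral_enorm_coordCondExp_rpow_le (hp : 2 ≤ p) (hf : MemLp f (ENNReal.ofReal p) μ) :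
    ∫⁻ ω, ‖coordCondExp μ (fun k ↦ 𝒢 (n k)) f ω‖ₑ ^ p ∂μ ≤
      ENNReal.ofReal (p / 2) ^ (p / 2) * ∫⁻ ω, ‖f ω‖ₑ ^ p ∂μ := by
  have hf₂ : MemLp f 2 μ := hf.mono_exponent (by simpa using ENNReal.ofReal_le_ofReal hp)
  have hsq (k : κ) : Integrable (fun ω ↦ ‖f ω k‖ ^ 2) μ :=
    (memLp_two_iff_integrable_sq_norm (hf₂.eval_piLp k).1).1 (hf₂.eval_piLp k)
  have jensen : ∀ᵐ ω ∂μ, ∀ k, ‖coordCondExp μ (fun k ↦ 𝒢 (n k)) f ω k‖ₑ ^ 2 ≤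
      μ⁻[fun ω ↦ ‖f ω k‖ₑ ^ 2 | 𝒢 (n k)] ω :=
    ae_all_iff.2 fun k ↦ enorm_condExp_sq_le (hsq k)
  simp_rw [enorm_rpow_eq_sum_rpow]
  calc
    ∫⁻ ω, (∑ k, ‖coordCondExp μ (fun k ↦ 𝒢 (n k)) f ω k‖ₑ ^ 2) ^ (p / 2) ∂μ ≤
        ∫⁻ ω, (∑ k, μ⁻[fun ω ↦ ‖f ω k‖ₑ ^ 2 | 𝒢 (n k)] ω) ^ (p / 2) ∂μ := by
      refine lintegral_mono_ae ?_
      filter_upwards [jensen] with ω hω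
      gcongr with k
      exact hω k
    _ ≤ ENNReal.ofReal (p / 2) ^ (p / 2) * ∫⁻ ω, (∑ k, ‖f ω k‖ₑ ^ 2) ^ (p / 2) ∂μ :=
      lintegral_sum_condLExp_rpow_le 𝒢 n (fun k ↦ (hf.eval_piLp k).1.enorm.pow_const 2)
        (by linarith) Finset.univ

lemma eLpNorm_coordCondExp_le_of_two_le (hp : 2 ≤ p) (hf : MemLp f (ENNReal.ofReal p) μ) :
    eLpNorm (coordCondExp μ (fun k ↦ 𝒢 (n k)) f) (ENNReal.ofReal p) μ ≤
      ENNReal.ofReal √(p / 2) * eLpNorm f (ENNReal.ofReal p) μ := by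
  have hp₀ : 0 < p := by linarith
  have hconst : (ENNReal.ofReal (p / 2) ^ (p / 2)) ^ (1 / p) = ENNReal.ofReal √(p / 2) := by
    rw [← ENNReal.rpow_mul, Real.sqrt_eq_rpow,
      ← ENNReal.ofReal_rpow_of_nonneg (by positivity) (by norm_num)]
    congr 1
    field_simp
  rw [eLpNorm_ofReal_eq_lintegral _ hp₀, eLpNorm_ofReal_eq_lintegral _ hp₀, ← hconst,
    ← ENNReal.mul_rpow_of_nonneg _ _ (by positivity)]
  gcongr
  exact lintegral_enorm_coordCondExp_rpow_le 𝒢 n hp hf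

lemma eLpNorm_coordCondExp_le_of_two_le_conj (hpq : p.HolderConjugate q) (hq : 2 ≤ q)
    (hf : MemLp f (ENNReal.ofReal p) μ) :
    eLpNorm (coordCondExp μ (fun k ↦ 𝒢 (n k)) f) (ENNReal.ofReal p) μ ≤
      ENNReal.ofReal √(q / 2) * eLpNorm f (ENNReal.ofReal p) μ := by
  have : (ENNReal.ofReal p).HolderConjugate (ENNReal.ofReal q) := hpq.ennrealOfReal
  have hp₁ : 1 ≤ ENNReal.ofReal p := ENNReal.HolderConjugate.one_le _ (ENNReal.ofReal q)
  have hq₁ : 1 ≤ ENNReal.ofReal q := ENNReal.HolderConjugate.one_le _ (ENNReal.ofReal p)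
  refine eLpNorm_le_of_forall_integral_inner_le hpq (memLp_coordCondExp hp₁ hf) fun g hg ↦ ?_
  calc
    ENNReal.ofReal (∫ ω, ⟪coordCondExp μ (fun k ↦ 𝒢 (n k)) f ω, g ω⟫ ∂μ) =
        ENNReal.ofReal (∫ ω, ⟪f ω, coordCondExp μ (fun k ↦ 𝒢 (n k)) g ω⟫ ∂μ) := by
      rw [integral_inner_coordCondExp_comm (fun k ↦ 𝒢.le (n k)) hf hg]
    _ ≤ eLpNorm f (ENNReal.ofReal p) μ *
        eLpNorm (coordCondExp μ (fun k ↦ 𝒢 (n k)) g) (ENNReal.ofReal q) μ :=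
      ofReal_integral_inner_le hf.1 (memLp_coordCondExp hq₁ hg).1 _ _
    _ ≤ eLpNorm f (ENNReal.ofReal p) μ *
        (ENNReal.ofReal √(q / 2) * eLpNorm g (ENNReal.ofReal q) μ) := by
      gcongr
      exact eLpNorm_coordCondExp_le_of_two_le 𝒢 n hq hg
    _ = ENNReal.ofReal √(q / 2) * eLpNorm f (ENNReal.ofReal p) μ *
        eLpNorm g (ENNReal.ofReal q) μ := by ring

theorem eLpNorm_coordCondExp_le (hpq : p.HolderConjugate q) (hf : MemLp f (ENNReal.ofReal p) μ) :
    eLpNorm (coordCondExp μ (fun k ↦ 𝒢 (n k)) f) (ENNReal.ofReal p) μ ≤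
      ENNReal.ofReal √(max p q / 2) * eLpNorm f (ENNReal.ofReal p) μ := by
  rcases le_total 2 p with hp | hp
  · refine (eLpNorm_coordCondExp_le_of_two_le 𝒢 n hp hf).trans ?_
    gcongr
    exact le_max_left p q
  · have hq : 2 ≤ q := by
      have := hpq.mul_eq_add
      nlinarith [hpq.lt, hpq.symm.lt]
    refine (eLpNorm_coordCondExp_le_of_two_le_conj 𝒢 n hpq hq hf).trans ?_
    gcongr
    exact le_max_right p q

end Filtration

end CoordCondExp

section SquareFunction

variable {Ω κ T H : Type*} {mΩ : MeasurableSpace Ω} {μ : Measure Ω} [IsFiniteMeasure μ]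
  [LinearOrder T] [NormedAddCommGroup H] [InnerProductSpace ℝ H] [CompleteSpace H]

theorem lintegral_sum_condExp_sq_rpow_le {p q : ℝ} (hpq : p.HolderConjugate q)
    (𝒢 : Filtration T mΩ) (n : κ → T) {f : κ → Ω → H} (hf : ∀ k, AEStronglyMeasurable (f k) μ)
    (s : Finset κ) :
    (∫⁻ ω, (∑ k ∈ s, ‖μ[f k | 𝒢 (n k)] ω‖ₑ ^ 2) ^ (p / 2) ∂μ) ^ (1 / p) ≤
      ENNReal.ofReal √(max p q / 2) *
        (∫⁻ ω, (∑ k ∈ s, ‖f k ω‖ₑ ^ 2) ^ (p / 2) ∂μ) ^ (1 / p) := by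
  set F : Ω → PiLp 2 fun _ : s ↦ H := fun ω ↦ WithLp.toLp 2 fun k ↦ f k ω
  have hF_norm : eLpNorm F (ENNReal.ofReal p) μ =
      (∫⁻ ω, (∑ k ∈ s, ‖f k ω‖ₑ ^ 2) ^ (p / 2) ∂μ) ^ (1 / p) := by
    simp_rw [eLpNorm_eq_lintegral_sum_rpow F hpq.pos, ← Finset.sum_coe_sort s, F]
  have hEF_norm : eLpNorm (coordCondExp μ (fun k : s ↦ 𝒢 (n k)) F) (ENNReal.ofReal p) μ =
      (∫⁻ ω, (∑ k ∈ s, ‖μ[f k | 𝒢 (n k)] ω‖ₑ ^ 2) ^ (p / 2) ∂μ) ^ (1 / p) := by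
    simp_rw [eLpNorm_eq_lintegral_sum_rpow _ hpq.pos, ← Finset.sum_coe_sort s, coordCondExp, F]
  rw [← hF_norm, ← hEF_norm]
  rcases eq_or_ne (eLpNorm F (ENNReal.ofReal p) μ) ∞ with htop | htop
  · have hconst : 0 < max p q / 2 := half_pos (lt_max_of_lt_left hpq.pos)
    rw [htop, ENNReal.mul_top (by simpa using hconst)]
    exact le_top
  · have hF_meas : AEStronglyMeasurable F μ :=
      memLp_zero_iff_aestronglyMeasurable.1 <| MemLp.of_eval_piLp fun k ↦
        memLp_zero_iff_aestronglyMeasurable.2 (hf k)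
    exact eLpNorm_coordCondExp_le 𝒢 _ hpq ⟨hF_meas, htop.lt_top⟩

end SquareFunction

end SteinInequality

theorem stmt_13_general {Ω κ T H : Type*} [NormedAddCommGroup H] [InnerProductSpace ℝ H]
    [CompleteSpace H] [Countable κ] [LinearOrder T] {mΩ : MeasurableSpace Ω} {μ : Measure Ω}
    [IsFiniteMeasure μ] {p q : ℝ} (hpq : p.HolderConjugate q) (𝒢 : Filtration T mΩ)
    {f : κ → Ω → H} (hf : ∀ k, AEStronglyMeasurable (f k) μ) (n : κ → T) :
    (∫⁻ ω, (∑' k, ‖μ[f k | 𝒢 (n k)] ω‖ₑ ^ 2) ^ (p / 2) ∂μ) ^ (1 / p) ≤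
      ENNReal.ofReal √(max p q / 2) *
        (∫⁻ ω, (∑' k, ‖f k ω‖ₑ ^ 2) ^ (p / 2) ∂μ) ^ (1 / p) := by
  have hp : 0 < p := hpq.pos
  have hcond (k : κ) : AEMeasurable (fun ω ↦ ‖μ[f k | 𝒢 (n k)] ω‖ₑ ^ 2) μ :=
    (stronglyMeasurable_condExp.mono (𝒢.le _)).aestronglyMeasurable.enorm.pow_const 2
  rw [SteinInequality.lintegral_tsum_rpow_eq_iSup hcond (half_pos hp),
    one_div, ENNReal.rpow_inv_le_iff hp]
  refine iSup_le fun s ↦ ?_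
  rw [← ENNReal.rpow_inv_le_iff hp, ← one_div]
  refine (SteinInequality.lintegral_sum_condExp_sq_rpow_le hpq 𝒢 n hf s).trans ?_
  gcongr
  exact ENNReal.sum_le_tsum s

/-- Stein's inequality: for every `p ∈ (1, ∞)` there is a constant `C_p`, depending only on
`p` (and the Hilbert space `H`), such that for every filtered probability space, every sequence
`(fₖ)` of `H`-valued integrable random variables and every sequence of indices `(nₖ)`,
`‖(∑ₖ ‖E[fₖ | F_{nₖ}]‖²)^{1/2}‖_{L_p} ≤ C_p ‖(∑ₖ ‖fₖ‖²)^{1/2}‖_{L_p}`. -/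
theorem stmt_13 {H : Type*} [NormedAddCommGroup H] [InnerProductSpace ℝ H] [CompleteSpace H]
    [SecondCountableTopology H] (p : ℝ) (hp : 1 < p) :
    ∃ C : ℝ≥0∞, C ≠ ∞ ∧
      ∀ (Ω : Type) (mΩ : MeasurableSpace Ω) (μ : Measure Ω), IsProbabilityMeasure μ →
        ∀ (𝒢 : Filtration ℕ mΩ) (f : ℕ → Ω → H), (∀ k, Integrable (f k) μ) →
          ∀ nk : ℕ → ℕ,
            (∫⁻ ω, (∑' k, (‖(μ[f k | 𝒢 (nk k)]) ω‖₊ : ℝ≥0∞) ^ 2) ^ (p / 2) ∂μ) ^ (1 / p) ≤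
              C * (∫⁻ ω, (∑' k, (‖f k ω‖₊ : ℝ≥0∞) ^ 2) ^ (p / 2) ∂μ) ^ (1 / p) :=
  ⟨_, ENNReal.ofReal_ne_top, fun _ _ _ _ 𝒢 _ hf nk ↦
    stmt_13_general (.conjExponent hp) 𝒢 (fun k ↦ (hf k).1) nk⟩
end
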